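/- For every real q with 0 < q < 1 one has 2·q^(1/8) / ∏_{k=0}^∞ (1 − q^(k+1/2))² = (∑_{k,n∈ℤ} q^(n²/2 + (k+1/2)²/2)) / ∏_{n=1}^∞ (1 − q^n)². -/

import Mathlib

open scoped BigOperators

/-!
Put `t = q ^ (1/8)` and `x = t ^ 4 = q ^ (1/2)`, so that every exponent becomes an integer. Since
`t ^ (4 n² + (2 k + 1)²) = t · x ^ (n²) · x ^ (k² + k)`, the double sum is `t` times a product of
two theta series, which the Jacobi triple product at `z = 1` and at `z = x` evaluates as
`∏ (1 + x ^ (2n+1))² ∏ (1 - x ^ (2n+2))` and `2 ∏ (1 + x ^ (2n+2))² ∏ (1 - x ^ (2n+2))`. Euler's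
identity `∏ (1 + x ^ (n+1)) · ∏ (1 - x ^ (2n+1)) = 1` then collapses the product of the two.

The triple product itself is the limit of the finite `q`-binomial theorem with base `x²`, recentred
at its middle term: the coefficient of each `x ^ (j²) z ^ j` is a Gaussian binomial coefficient
tending to `1 / ∏ (1 - x ^ (2n+2))`, and these coefficients are uniformly bounded, so the limit may
be taken termwise.
-/

section GaussianBinomial

open Finset

/-- The Gaussian binomial coefficient `[n choose k]_q`, defined by the `q`-Pascal rule so that it
makes sense for every `q`, including roots of unity. -/
def gaussBinom {R : Type*} [CommSemiring R] (q : R) : ℕ → ℕ → R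
  | _, 0 => 1
  | 0, _ + 1 => 0
  | n + 1, k + 1 => q ^ (k + 1) * gaussBinom q n (k + 1) + gaussBinom q n k

/-- The `q`-Pochhammer symbol `(q; q)_n = (1 - q)(1 - q²)⋯(1 - qⁿ)`, the `q`-analogue of `n!` in
the factorial formula for Gaussian binomial coefficients. -/
def qPochhammer {R : Type*} [CommRing R] (q : R) (n : ℕ) : R :=
  ∏ i ∈ range n, (1 - q ^ (i + 1))

section CommSemiring

variable {R : Type*} [CommSemiring R] (q : R)

@[simp]
lemma gaussBinom_zero_right (n : ℕ) : gaussBinom q n 0 = 1 := by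
  cases n <;> rfl

lemma gaussBinom_succ_succ (n k : ℕ) :
    gaussBinom q (n + 1) (k + 1) = q ^ (k + 1) * gaussBinom q n (k + 1) + gaussBinom q n k :=
  rfl

lemma gaussBinom_eq_zero_of_lt : ∀ {n k : ℕ}, n < k → gaussBinom q n k = 0
  | 0, _ + 1, _ => rfl
  | n + 1, k + 1, h => by
    rw [gaussBinom_succ_succ, gaussBinom_eq_zero_of_lt (by lia : n < k + 1),
      gaussBinom_eq_zero_of_lt (by lia : n < k), mul_zero, add_zero]

@[simp]
lemma gaussBinom_self (n : ℕ) : gaussBinom q n n = 1 := by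
  induction n with
  | zero => rfl
  | succ n ih =>
    rw [gaussBinom_succ_succ, ih, gaussBinom_eq_zero_of_lt q n.lt_succ_self, mul_zero, zero_add]

theorem prod_one_add_mul_pow_eq_sum_gaussBinom (z : R) (n : ℕ) :
    ∏ i ∈ range n, (1 + z * q ^ i) =
      ∑ k ∈ range (n + 1), gaussBinom q n k * q ^ k.choose 2 * z ^ k := by
  induction n generalizing z with
  | zero => simp
  | succ n ih =>
    have shift : ∏ i ∈ range n, (1 + z * q ^ (i + 1)) =
        ∑ k ∈ range (n + 1), gaussBinom q n k * q ^ k.choose 2 * (z * q) ^ k := by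
      rw [← ih]
      exact prod_congr rfl fun i _ ↦ by ring
    have pascal (k : ℕ) :
        gaussBinom q (n + 1) (k + 1) * q ^ (k + 1).choose 2 * z ^ (k + 1) =
          gaussBinom q n (k + 1) * q ^ (k + 1).choose 2 * (z * q) ^ (k + 1) +
            gaussBinom q n k * q ^ k.choose 2 * (z * q) ^ k * z := by
      rw [gaussBinom_succ_succ, Nat.choose_succ_succ' k 1, Nat.choose_one_right]
      ring
    have split_first : ∑ k ∈ range (n + 1), gaussBinom q n k * q ^ k.choose 2 * (z * q) ^ k =
        ∑ k ∈ range (n + 1),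
          gaussBinom q n (k + 1) * q ^ (k + 1).choose 2 * (z * q) ^ (k + 1) + 1 := by
      have := sum_range_succ' (fun k ↦ gaussBinom q n k * q ^ k.choose 2 * (z * q) ^ k) (n + 1)
      rw [sum_range_succ, gaussBinom_eq_zero_of_lt q n.lt_succ_self] at this
      simpa using this
    rw [prod_range_succ', shift, sum_range_succ' _ (n + 1)]
    simp only [pascal, sum_add_distrib, ← sum_mul, gaussBinom_zero_right, Nat.choose_zero_succ,
      pow_zero, mul_one]
    rw [add_right_comm, ← split_first, mul_one_add]

end CommSemiring

section CommRing

variable {R : Type*} [CommRing R] (q : R)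

lemma qPochhammer_succ (n : ℕ) : qPochhammer q (n + 1) = qPochhammer q n * (1 - q ^ (n + 1)) :=
  prod_range_succ _ _

theorem gaussBinom_mul_qPochhammer : ∀ a b : ℕ,
    gaussBinom q (a + b) a * (qPochhammer q a * qPochhammer q b) = qPochhammer q (a + b)
  | 0, b => by simp [qPochhammer]
  | a + 1, 0 => by simp [qPochhammer]
  | a + 1, b + 1 => by
    have left := gaussBinom_mul_qPochhammer a (b + 1)
    have right := gaussBinom_mul_qPochhammer (a + 1) b
    rw [← add_assoc] at left
    rw [add_right_comm] at right
    rw [← add_assoc, add_right_comm a 1 b, gaussBinom_succ_succ, qPochhammer_succ q (a + b + 1)]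
    rw [qPochhammer_succ q b] at left ⊢
    rw [qPochhammer_succ q a] at right ⊢
    linear_combination (1 - q ^ (a + 1)) * left + q ^ (a + 1) * (1 - q ^ (b + 1)) * right

end CommRing

lemma two_mul_choose_two_add_self (k : ℕ) : 2 * k.choose 2 + k = k ^ 2 := by
  induction k with
  | zero => rfl
  | succ k ih =>
    rw [Nat.choose_succ_succ' k 1, Nat.choose_one_right]
    linarith

section Field

variable {K : Type*} [Field K] {x z : K}

lemma pow_sq_mul_prod_one_add_eq (hx : x ≠ 0) (hz : z ≠ 0) (m : ℕ) :
    x ^ m ^ 2 * ∏ i ∈ range m, (1 + z * x / x ^ (2 * m) * (x ^ 2) ^ i) =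
      z ^ m * ∏ i ∈ range m, (1 + z⁻¹ * x ^ (2 * i + 1)) := by
  induction m with
  | zero => simp
  | succ m ih =>
    have shift (i : ℕ) : z * x / x ^ (2 * (m + 1)) * (x ^ 2) ^ (i + 1) =
        z * x / x ^ (2 * m) * (x ^ 2) ^ i := by
      field_simp
      ring
    rw [prod_range_succ', prod_range_succ]
    simp only [shift]
    calc _ = (x ^ m ^ 2 * ∏ i ∈ range m, (1 + z * x / x ^ (2 * m) * (x ^ 2) ^ i)) *
          (x ^ (2 * m + 1) + z) := by field_simp; ring
      _ = _ := by rw [ih]; field_simp; ring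

theorem prod_one_add_mul_prod_one_add_inv_eq_sum_range (hx : x ≠ 0) (hz : z ≠ 0) (m n : ℕ) :
    (∏ i ∈ range n, (1 + z * x ^ (2 * i + 1))) * ∏ i ∈ range m, (1 + z⁻¹ * x ^ (2 * i + 1)) =
      ∑ k ∈ range (m + n + 1),
        gaussBinom (x ^ 2) (m + n) k * (x ^ (k - m : ℤ) ^ 2 * z ^ (k - m : ℤ)) := by
  have join : ∏ i ∈ range (m + n), (1 + z * x / x ^ (2 * m) * (x ^ 2) ^ i) =
      (∏ i ∈ range m, (1 + z * x / x ^ (2 * m) * (x ^ 2) ^ i)) *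
        ∏ i ∈ range n, (1 + z * x ^ (2 * i + 1)) := by
    rw [prod_range_add]
    refine congrArg _ (prod_congr rfl fun i _ ↦ ?_)
    field_simp
    ring
  have coeff (k : ℕ) : x ^ (k - m : ℤ) ^ 2 * z ^ (k - m : ℤ) =
      x ^ m ^ 2 / z ^ m * ((x ^ 2) ^ k.choose 2 * (z * x / x ^ (2 * m)) ^ k) := by
    have exponent : (k - m : ℤ) ^ 2 =
        (m ^ 2 : ℕ) + (2 * k.choose 2 : ℕ) + k - (2 * m * k : ℕ) := by
      have := congrArg (Nat.cast : ℕ → ℤ) (two_mul_choose_two_add_self k)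
      push_cast at this ⊢
      linear_combination -this
    rw [exponent, zpow_sub₀ hx, zpow_add₀ hx, zpow_add₀ hx, zpow_sub₀ hz]
    simp only [zpow_natCast, mul_pow, div_pow, pow_mul]
    field_simp
  rw [mul_comm, ← mul_right_inj' (pow_ne_zero m hz), ← mul_assoc,
    ← pow_sq_mul_prod_one_add_eq hx hz, mul_assoc, ← join, prod_one_add_mul_pow_eq_sum_gaussBinom,
    mul_sum, mul_sum]
  refine sum_congr rfl fun k _ ↦ ?_
  rw [coeff]
  field_simp

theorem prod_one_add_mul_prod_one_add_inv_eq_sum_Icc (hx : x ≠ 0) (hz : z ≠ 0) (n : ℕ) :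
    (∏ i ∈ range n, (1 + z * x ^ (2 * i + 1))) * ∏ i ∈ range n, (1 + z⁻¹ * x ^ (2 * i + 1)) =
      ∑ j ∈ Icc (-n : ℤ) n,
        gaussBinom (x ^ 2) (n + n) (j + n).toNat * (x ^ j ^ 2 * z ^ j) := by
  rw [prod_one_add_mul_prod_one_add_inv_eq_sum_range hx hz]
  refine sum_nbij' (fun k ↦ (k - n : ℤ)) (fun j ↦ (j + n).toNat) ?_ ?_ ?_ ?_ ?_ <;>
    simp <;> lia

end Field

end GaussianBinomial

section NormedField

open Filter Finset Topology

variable {𝕜 : Type*} [NormedField 𝕜] {q x z : 𝕜}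

lemma injective_two_mul_add (k : ℕ) : Function.Injective fun n : ℕ ↦ 2 * n + k :=
  fun _ _ h ↦ by simpa using h

lemma one_sub_pow_ne_zero (hq : ‖q‖ < 1) {n : ℕ} (hn : n ≠ 0) : 1 - q ^ n ≠ 0 := by
  refine sub_ne_zero.mpr fun h ↦ ?_
  have : ‖q‖ ^ n < 1 := pow_lt_one₀ (norm_nonneg q) hq hn
  rw [← norm_pow, ← h, norm_one] at this
  exact this.false

lemma qPochhammer_ne_zero (hq : ‖q‖ < 1) (n : ℕ) : qPochhammer q n ≠ 0 :=
  prod_ne_zero_iff.mpr fun i _ ↦ one_sub_pow_ne_zero hq i.succ_ne_zero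

lemma gaussBinom_add_eq_div (hq : ‖q‖ < 1) (a b : ℕ) :
    gaussBinom q (a + b) a =
      qPochhammer q (a + b) * ((qPochhammer q a)⁻¹ * (qPochhammer q b)⁻¹) := by
  have ha := qPochhammer_ne_zero hq a
  have hb := qPochhammer_ne_zero hq b
  rw [← gaussBinom_mul_qPochhammer]
  field_simp

lemma summable_norm_pow_sq_mul_pow (hx : ‖x‖ < 1) (z : 𝕜) :
    Summable fun n : ℕ ↦ ‖x ^ n ^ 2 * z ^ n‖ := by
  have lim : Tendsto (fun n : ℕ ↦ ‖x ^ n * z‖) atTop (𝓝 0) := by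
    simpa using ((tendsto_pow_atTop_nhds_zero_of_norm_lt_one hx).mul_const z).norm
  refine summable_geometric_two.of_norm_bounded_eventually_nat ?_
  filter_upwards [lim.eventually_le_const (by norm_num : (0 : ℝ) < 1 / 2)] with n hn
  rw [norm_norm, sq, pow_mul, ← mul_pow, norm_pow]
  exact pow_le_pow_left₀ (norm_nonneg _) hn n

lemma summable_norm_zpow_sq_mul_zpow (hx : ‖x‖ < 1) (z : 𝕜) :
    Summable fun j : ℤ ↦ ‖x ^ j ^ 2 * z ^ j‖ := by
  refine .of_nat_of_neg ?_ ?_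
  · exact_mod_cast summable_norm_pow_sq_mul_pow hx z
  · simp only [neg_sq, zpow_neg, ← inv_zpow z]
    exact_mod_cast summable_norm_pow_sq_mul_pow hx z⁻¹

variable [CompleteSpace 𝕜]

lemma multipliable_one_add_mul_pow (hq : ‖q‖ < 1) (c : 𝕜) {e : ℕ → ℕ} (he : e.Injective) :
    Multipliable fun n ↦ 1 + c * q ^ e n := by
  refine multipliable_one_add_of_summable ?_
  simp only [norm_mul]
  exact ((summable_norm_geometric_of_norm_lt_one hq).comp_injective he).mul_left ‖c‖

lemma multipliable_one_add_pow (hq : ‖q‖ < 1) {e : ℕ → ℕ} (he : e.Injective) :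
    Multipliable fun n ↦ 1 + q ^ e n := by
  simpa using multipliable_one_add_mul_pow hq 1 he

lemma multipliable_one_sub_pow (hq : ‖q‖ < 1) {e : ℕ → ℕ} (he : e.Injective) :
    Multipliable fun n ↦ 1 - q ^ e n := by
  simpa [sub_eq_add_neg] using multipliable_one_add_mul_pow hq (-1) he

lemma tprod_one_sub_pow_ne_zero (hq : ‖q‖ < 1) :
    ∏' n : ℕ, (1 - q ^ (n + 1)) ≠ 0 := by
  simp only [sub_eq_add_neg]
  refine tprod_one_add_ne_zero_of_summable (fun n ↦ ?_) ?_
  · simpa [sub_eq_add_neg] using one_sub_pow_ne_zero hq n.succ_ne_zero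
  · simp only [norm_neg]
    exact (summable_norm_geometric_of_norm_lt_one hq).comp_injective (add_left_injective 1)

lemma tendsto_qPochhammer (hq : ‖q‖ < 1) :
    Tendsto (qPochhammer q) atTop (𝓝 (∏' n : ℕ, (1 - q ^ (n + 1)))) :=
  (multipliable_one_sub_pow hq (add_left_injective 1)).hasProd.tendsto_prod_nat

lemma tendsto_gaussBinom (hq : ‖q‖ < 1) {ι : Type*} {l : Filter ι} {a b : ι → ℕ}
    (ha : Tendsto a l atTop) (hb : Tendsto b l atTop) :
    Tendsto (fun i ↦ gaussBinom q (a i + b i) (a i)) l (𝓝 (∏' n : ℕ, (1 - q ^ (n + 1)))⁻¹) := by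
  have lim := tendsto_qPochhammer hq
  have h0 := tprod_one_sub_pow_ne_zero hq
  simp only [gaussBinom_add_eq_div hq]
  rw [← mul_inv_cancel_left₀ h0 (∏' n : ℕ, (1 - q ^ (n + 1)))⁻¹]
  exact (lim.comp (ha.atTop_add_atTop hb)).mul
    (((lim.comp ha).inv₀ h0).mul ((lim.comp hb).inv₀ h0))

lemma exists_norm_gaussBinom_le (hq : ‖q‖ < 1) : ∃ C, ∀ n k, ‖gaussBinom q n k‖ ≤ C := by
  have lim := tendsto_qPochhammer hq
  obtain ⟨A, hA⟩ := (Metric.isBounded_range_of_tendsto _ lim).exists_norm_le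
  obtain ⟨B, hB⟩ := (Metric.isBounded_range_of_tendsto _
    (lim.inv₀ (tprod_one_sub_pow_ne_zero hq))).exists_norm_le
  simp only [Set.forall_mem_range] at hA hB
  have hA0 : 0 ≤ A := (norm_nonneg _).trans (hA 0)
  have hB0 : 0 ≤ B := (norm_nonneg _).trans (hB 0)
  refine ⟨A * (B * B), fun n k ↦ ?_⟩
  obtain hnk | hkn := lt_or_ge n k
  · rw [gaussBinom_eq_zero_of_lt q hnk, norm_zero]
    positivity
  · obtain ⟨m, rfl⟩ := Nat.exists_eq_add_of_le hkn
    rw [gaussBinom_add_eq_div hq, norm_mul, norm_mul]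
    gcongr
    exacts [hA _, hB _, hB _]

theorem tendsto_prod_one_add_mul_prod_one_add_inv (hx0 : x ≠ 0) (hx : ‖x‖ < 1) (hz : z ≠ 0) :
    Tendsto (fun n ↦ (∏ i ∈ range n, (1 + z * x ^ (2 * i + 1))) *
        ∏ i ∈ range n, (1 + z⁻¹ * x ^ (2 * i + 1))) atTop
      (𝓝 (∑' j : ℤ, (∏' n : ℕ, (1 - (x ^ 2) ^ (n + 1)))⁻¹ * (x ^ j ^ 2 * z ^ j))) := by
  have hq : ‖x ^ 2‖ < 1 := by simpa using pow_lt_one₀ (norm_nonneg x) hx two_ne_zero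
  obtain ⟨C, hC⟩ := exists_norm_gaussBinom_le hq
  simp only [prod_one_add_mul_prod_one_add_inv_eq_sum_Icc hx0 hz,
    sum_eq_tsum_indicator (L := .unconditional ℤ)]
  refine tendsto_tsum_of_dominated_convergence
    ((summable_norm_zpow_sq_mul_zpow hx z).mul_left C) (fun j ↦ ?_) (.of_forall fun n j ↦ ?_)
  · have lim := tendsto_gaussBinom hq (l := atTop) (a := fun n : ℕ ↦ (j + n).toNat)
      (b := fun n ↦ (n - j).toNat)
      (tendsto_atTop.mpr fun b ↦ eventually_atTop.mpr ⟨j.natAbs + b, by lia⟩)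
      (tendsto_atTop.mpr fun b ↦ eventually_atTop.mpr ⟨j.natAbs + b, by lia⟩)
    refine (lim.mul_const _).congr' ?_
    filter_upwards [eventually_ge_atTop j.natAbs] with n hn
    rw [Set.indicator_of_mem (by simp; lia), show (j + n).toNat + (n - j).toNat = n + n by lia]
  · grw [norm_indicator_le_norm_self, norm_mul, hC]

theorem jacobi_triple_product (hx0 : x ≠ 0) (hx : ‖x‖ < 1) (hz : z ≠ 0) :
    (∏' n : ℕ, (1 + z * x ^ (2 * n + 1))) * (∏' n : ℕ, (1 + z⁻¹ * x ^ (2 * n + 1))) *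
      ∏' n : ℕ, (1 - (x ^ 2) ^ (n + 1)) = ∑' j : ℤ, x ^ j ^ 2 * z ^ j := by
  have hq : ‖x ^ 2‖ < 1 := by simpa using pow_lt_one₀ (norm_nonneg x) hx two_ne_zero
  have lim := tendsto_nhds_unique (tendsto_prod_one_add_mul_prod_one_add_inv hx0 hx hz)
    ((multipliable_one_add_mul_pow hx z (injective_two_mul_add 1)).hasProd.tendsto_prod_nat.mul
      (multipliable_one_add_mul_pow hx z⁻¹ (injective_two_mul_add 1)).hasProd.tendsto_prod_nat)
  rw [← lim, tsum_mul_left, mul_comm, mul_inv_cancel_left₀ (tprod_one_sub_pow_ne_zero hq)]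

lemma tprod_one_add_pow_mul_tprod_one_sub_odd_pow (hq : ‖q‖ < 1) :
    (∏' n : ℕ, (1 + q ^ (n + 1))) * ∏' n : ℕ, (1 - q ^ (2 * n + 1)) = 1 := by
  have h0 := tprod_one_sub_pow_ne_zero hq
  have parity : (∏' n : ℕ, (1 - q ^ (2 * n + 1))) * ∏' n : ℕ, (1 - q ^ (2 * n + 1 + 1)) =
      ∏' n : ℕ, (1 - q ^ (n + 1)) :=
    tprod_even_mul_odd (f := fun n ↦ 1 - q ^ (n + 1))
      (multipliable_one_sub_pow hq (injective_two_mul_add 1))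
      (multipliable_one_sub_pow hq (injective_two_mul_add 2))
  have diff_sq : (∏' n : ℕ, (1 + q ^ (n + 1))) * ∏' n : ℕ, (1 - q ^ (n + 1)) =
      ∏' n : ℕ, (1 - q ^ (2 * n + 1 + 1)) := by
    rw [← (multipliable_one_add_pow hq (add_left_injective 1)).tprod_mul
      (multipliable_one_sub_pow hq (add_left_injective 1))]
    exact tprod_congr fun n ↦ by ring
  refine mul_right_cancel₀ h0 ?_
  rw [one_mul, mul_right_comm, diff_sq, mul_comm, parity]

theorem tsum_zpow_sq (hx0 : x ≠ 0) (hx : ‖x‖ < 1) :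
    ∑' j : ℤ, x ^ j ^ 2 =
      (∏' n : ℕ, (1 + x ^ (2 * n + 1))) ^ 2 * ∏' n : ℕ, (1 - (x ^ 2) ^ (n + 1)) := by
  simpa [sq] using (jacobi_triple_product hx0 hx one_ne_zero).symm

theorem tsum_zpow_sq_add_self (hx0 : x ≠ 0) (hx : ‖x‖ < 1) :
    ∑' j : ℤ, x ^ (j ^ 2 + j) =
      2 * (∏' n : ℕ, (1 + x ^ (2 * n + 2))) ^ 2 * ∏' n : ℕ, (1 - (x ^ 2) ^ (n + 1)) := by
  have jtp := jacobi_triple_product hx0 hx hx0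
  have up (n : ℕ) : x * x ^ (2 * n + 1) = x ^ (2 * n + 2) := by ring
  have down (n : ℕ) : x⁻¹ * x ^ (2 * n + 1) = x ^ (2 * n) := by
    rw [pow_succ', inv_mul_cancel_left₀ hx0]
  have first : ∏' n : ℕ, (1 + x ^ (2 * n)) = 2 * ∏' n : ℕ, (1 + x ^ (2 * n + 2)) := by
    rw [tprod_eq_zero_mul' (f := fun n ↦ 1 + x ^ (2 * n))
      (multipliable_one_add_pow hx (injective_two_mul_add 2)), mul_zero, pow_zero,
      one_add_one_eq_two]
    rfl
  simp only [up, down, first] at jtp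
  simp only [zpow_add₀ hx0, ← jtp]
  ring

theorem tsum_zpow_sq_mul_tsum_zpow_sq_add_self (hx0 : x ≠ 0) (hx : ‖x‖ < 1) :
    (∑' j : ℤ, x ^ j ^ 2) * ∑' j : ℤ, x ^ (j ^ 2 + j) =
      2 * (∏' n : ℕ, (1 - (x ^ 2) ^ (n + 1))) ^ 2 / (∏' n : ℕ, (1 - x ^ (2 * n + 1))) ^ 2 := by
  have parity : (∏' n : ℕ, (1 + x ^ (2 * n + 1))) * ∏' n : ℕ, (1 + x ^ (2 * n + 2)) =
      ∏' n : ℕ, (1 + x ^ (n + 1)) :=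
    tprod_even_mul_odd (f := fun n ↦ 1 + x ^ (n + 1))
      (multipliable_one_add_pow hx (injective_two_mul_add 1))
      (multipliable_one_add_pow hx (injective_two_mul_add 2))
  have euler := tprod_one_add_pow_mul_tprod_one_sub_odd_pow hx
  rw [tsum_zpow_sq hx0 hx, tsum_zpow_sq_add_self hx0 hx,
    eq_div_iff (pow_ne_zero 2 (right_ne_zero_of_mul_eq_one euler))]
  calc
    _ = 2 * (∏' n : ℕ, (1 - (x ^ 2) ^ (n + 1))) ^ 2 *
        ((∏' n : ℕ, (1 + x ^ (2 * n + 1))) * (∏' n : ℕ, (1 + x ^ (2 * n + 2))) *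
          ∏' n : ℕ, (1 - x ^ (2 * n + 1))) ^ 2 := by ring
    _ = _ := by rw [parity, euler, one_pow, mul_one]

theorem tsum_zpow_four_mul_sq_add_odd_sq {t : 𝕜} (ht0 : t ≠ 0) (ht : ‖t‖ < 1) :
    ∑' p : ℤ × ℤ, t ^ (4 * p.2 ^ 2 + (2 * p.1 + 1) ^ 2) =
      t * ((∑' j : ℤ, (t ^ 4) ^ j ^ 2) * ∑' j : ℤ, (t ^ 4) ^ (j ^ 2 + j)) := by
  have hx : ‖t ^ 4‖ < 1 := by simpa using pow_lt_one₀ (norm_nonneg t) ht four_ne_zero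
  rw [mul_comm (∑' j : ℤ, (t ^ 4) ^ j ^ 2), tsum_mul_tsum_of_summable_norm, ← tsum_mul_left]
  · refine tsum_congr fun p ↦ ?_
    simp only [← zpow_natCast t, ← zpow_mul, ← zpow_add₀ ht0, ← zpow_one_add₀ ht0]
    congr 1
    push_cast
    ring
  · simpa only [zpow_add₀ (pow_ne_zero 4 ht0)] using summable_norm_zpow_sq_mul_zpow hx (t ^ 4)
  · simpa using summable_norm_zpow_sq_mul_zpow hx 1

end NormedField

theorem stmt8_general {𝕜 : Type*} [NormedField 𝕜] [CompleteSpace 𝕜] {t : 𝕜} (ht : ‖t‖ < 1) :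
    2 * t / ∏' k : ℕ, (1 - t ^ (8 * k + 4)) ^ 2 =
      (∑' p : ℤ × ℤ, t ^ (4 * p.2 ^ 2 + (2 * p.1 + 1) ^ 2)) /
        ∏' n : ℕ, (1 - t ^ (8 * (n + 1))) ^ 2 := by
  obtain rfl | ht0 := eq_or_ne t 0
  · have exponent_ne_zero (p : ℤ × ℤ) : 4 * p.2 ^ 2 + (2 * p.1 + 1) ^ 2 ≠ 0 := by
      have : 2 * p.1 + 1 ≠ 0 := by lia
      positivity
    simp [zero_zpow _ (exponent_ne_zero _)]
  have hx : ‖t ^ 4‖ < 1 := by simpa using pow_lt_one₀ (norm_nonneg t) ht four_ne_zero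
  have hq : ‖t ^ 8‖ < 1 := by simpa using pow_lt_one₀ (norm_nonneg t) ht (by norm_num)
  have odd (k : ℕ) : t ^ (8 * k + 4) = (t ^ 4) ^ (2 * k + 1) := by ring
  have even (n : ℕ) : t ^ (8 * (n + 1)) = (t ^ 8) ^ (n + 1) := pow_mul _ _ _
  have base : (t ^ 4) ^ 2 = t ^ 8 := (pow_mul _ _ _).symm
  have h0 := tprod_one_sub_pow_ne_zero hq
  simp only [odd, even]
  rw [(multipliable_one_sub_pow hx (injective_two_mul_add 1)).tprod_pow,
    (multipliable_one_sub_pow hq (add_left_injective 1)).tprod_pow,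
    tsum_zpow_four_mul_sq_add_odd_sq ht0 ht,
    tsum_zpow_sq_mul_tsum_zpow_sq_add_self (pow_ne_zero 4 ht0) hx, base]
  field_simp

section RealPower

variable {q : ℝ}

lemma rpow_one_div_eight_pow_eight_mul (hq : 0 ≤ q) (n : ℕ) :
    (q ^ (1 / 8 : ℝ)) ^ (8 * n) = q ^ n := by
  rw [pow_mul, ← Real.rpow_mul_natCast hq]
  norm_num

lemma rpow_one_div_eight_pow_eight_mul_add_four (hq : 0 ≤ q) (k : ℕ) :
    (q ^ (1 / 8 : ℝ)) ^ (8 * k + 4) = q ^ (k + 1 / 2 : ℝ) := by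
  rw [← Real.rpow_mul_natCast hq]
  congr 1
  push_cast
  ring

lemma rpow_one_div_eight_zpow_four_mul_sq_add_odd_sq (hq : 0 ≤ q) (k n : ℤ) :
    (q ^ (1 / 8 : ℝ)) ^ (4 * n ^ 2 + (2 * k + 1) ^ 2) =
      q ^ ((n : ℝ) ^ 2 / 2 + ((k : ℝ) + 1 / 2) ^ 2 / 2) := by
  rw [← Real.rpow_mul_intCast hq]
  congr 1
  push_cast
  ring

lemma norm_rpow_lt_one (hq0 : 0 ≤ q) (hq1 : q < 1) {s : ℝ} (hs : 0 < s) : ‖q ^ s‖ < 1 := by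
  rw [Real.norm_of_nonneg (Real.rpow_nonneg hq0 s)]
  exact Real.rpow_lt_one hq0 hq1 hs

end RealPower

/-- Equivalence of twisted representations `[1]₋·[1]₋ ∼ [1,1]₊·[1,−1]₊`:
    `2·q^(1/8) / ∏_{k=0}^∞ (1 − q^(k+1/2))²
     = (∑_{k,n∈ℤ} q^(n²/2 + (k+1/2)²/2)) / ∏_{n=1}^∞ (1 − q^n)²`. -/
theorem stmt8 (q : ℝ) (hq0 : 0 < q) (hq1 : q < 1) :
    2 * q ^ ((1 / 8 : ℝ)) / ∏' k : ℕ, (1 - q ^ ((k : ℝ) + 1 / 2)) ^ 2 =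
      (∑' p : ℤ × ℤ, q ^ ((p.2 : ℝ) ^ 2 / 2 + ((p.1 : ℝ) + 1 / 2) ^ 2 / 2)) /
        ∏' n : ℕ, (1 - q ^ (n + 1)) ^ 2 := by
  simpa only [rpow_one_div_eight_pow_eight_mul_add_four hq0.le,
    rpow_one_div_eight_pow_eight_mul hq0.le,
    rpow_one_div_eight_zpow_four_mul_sq_add_odd_sq hq0.le] using
    stmt8_general (norm_rpow_lt_one hq0.le hq1 (by norm_num : (0 : ℝ) < 1 / 8))
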